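/- Let A be a nonzero m×n matrix with integer entries such that ‖A‖∞ = 1 or ‖A‖∞ = 2. Then the solution relative magnitude of A satisfies ω(A) = 0 or ω(A) = 1. -/

import Mathlib

/-- The relative magnitude of a nonzero vector: `max {|x j| / |x i| : x i ≠ 0}`. -/
noncomputable def omegaVec {n : ℕ} (x : Fin n → ℝ) : ℝ :=
  sSup {r : ℝ | ∃ i j : Fin n, x i ≠ 0 ∧ r = |x j| / |x i|}

/-- The solution relative magnitude of a matrix: `inf {ω x : x ∈ N(A), x ≠ 0}`,
with the convention that it is `0` when the null space is trivial
(in Lean, `sInf ∅ = 0` for real numbers). -/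
noncomputable def omegaMat {m n : ℕ} (A : Matrix (Fin m) (Fin n) ℝ) : ℝ :=
  sInf {r : ℝ | ∃ x : Fin n → ℝ, x ≠ 0 ∧ A.mulVec x = 0 ∧ r = omegaVec x}

/-- `‖A‖∞`: the maximum row ℓ1 norm of an integer matrix, as a natural number. -/
def normInf {m n : ℕ} (A : Matrix (Fin m) (Fin n) ℤ) : ℕ :=
  Finset.univ.sup fun i => ∑ j, (A i j).natAbs

/-!
If an integer row `a` with `∑ |a j| ≤ 2` is orthogonal to `x`, then it is orthogonal to the sign
vector of `x`: were `∑ a j * sign (x j)` positive, the bound `2` would leave no room for a negative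
term, so `∑ a j * x j` would be a vanishing sum of nonnegative terms and all its terms would be
zero. Hence the null space of `A` is closed under taking sign vectors, and a nonzero sign vector
has relative magnitude `1`, the least possible value.
-/

open SignType (sign)
open scoped Matrix

section SignVector

variable {ι κ R : Type*} {s : Finset κ}

/-- The sign vector of `x`: the entrywise sign, with entries in `{-1, 0, 1}`. When it
solves the same homogeneous system as `x ≠ 0`, it is a solution of least relative magnitude. -/
def signVec [Ring R] [LinearOrder R] (x : κ → R) : κ → R := fun j => sign (x j)

lemma nonneg_of_sum_abs_le_two_of_sum_pos {b : κ → ℤ} (hb : ∑ j ∈ s, |b j| ≤ 2)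
    (hpos : 0 < ∑ j ∈ s, b j) : ∀ j ∈ s, 0 ≤ b j := by
  intro i hi
  by_contra! hneg
  have hle : |b i| - b i ≤ ∑ j ∈ s, (|b j| - b j) :=
    Finset.single_le_sum (f := fun j => |b j| - b j)
      (fun j _ => sub_nonneg.2 (le_abs_self (b j))) hi
  rw [Finset.sum_sub_distrib, abs_of_neg hneg] at hle
  lia

variable [Ring R] [LinearOrder R] [IsStrictOrderedRing R] {a : κ → ℤ} {x : κ → R}

lemma sum_mul_sign_nonpos_of_sum_mul_eq_zero (ha : ∑ j ∈ s, |a j| ≤ 2)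
    (hx : ∑ j ∈ s, (a j : R) * x j = 0) : ∑ j ∈ s, a j * (sign (x j) : ℤ) ≤ 0 := by
  by_contra! hpos
  have habs : ∑ j ∈ s, |a j * (sign (x j) : ℤ)| ≤ 2 := by
    refine (Finset.sum_le_sum fun j _ => ?_).trans ha
    rw [abs_mul]
    refine mul_le_of_le_one_right (abs_nonneg _) ?_
    cases sign (x j) <;> decide
  have hnonneg := nonneg_of_sum_abs_le_two_of_sum_pos habs hpos
  have hterm (j : κ) : (a j : R) * x j = ((a j * (sign (x j) : ℤ) : ℤ) : R) * |x j| := by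
    rw [Int.cast_mul, mul_assoc, SignType.intCast_cast, sign_mul_abs]
  have hzero : ∀ j ∈ s, (a j : R) * x j = 0 := by
    refine (Finset.sum_eq_zero_iff_of_nonneg fun j hj => ?_).1 hx
    rw [hterm]
    exact mul_nonneg (Int.cast_nonneg (hnonneg j hj)) (abs_nonneg _)
  refine hpos.ne' (Finset.sum_eq_zero fun j hj => ?_)
  rcases mul_eq_zero.1 (hzero j hj) with haj | hxj
  · rw [Int.cast_eq_zero.1 haj, zero_mul]
  · rw [hxj, sign_zero, SignType.coe_zero, mul_zero]

lemma sum_mul_sign_eq_zero_of_sum_mul_eq_zero (ha : ∑ j ∈ s, |a j| ≤ 2)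
    (hx : ∑ j ∈ s, (a j : R) * x j = 0) : ∑ j ∈ s, (a j : R) * (sign (x j) : R) = 0 := by
  have hnonpos := sum_mul_sign_nonpos_of_sum_mul_eq_zero ha hx
  have hnonneg : ∑ j ∈ s, -a j * (sign (x j) : ℤ) ≤ 0 :=
    sum_mul_sign_nonpos_of_sum_mul_eq_zero (a := fun j => -a j) (by simpa only [abs_neg] using ha)
      (by simpa only [Int.cast_neg, neg_mul, Finset.sum_neg_distrib, neg_eq_zero] using hx)
  simp only [neg_mul, Finset.sum_neg_distrib, Left.neg_nonpos_iff] at hnonneg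
  exact_mod_cast congrArg (Int.cast : ℤ → R) (hnonpos.antisymm hnonneg)

lemma signVec_ne_zero (hx : x ≠ 0) : signVec x ≠ 0 := by
  intro hsign
  refine hx (funext fun j => ?_)
  rw [← sign_mul_abs (x j), show (sign (x j) : R) = 0 from congrFun hsign j, zero_mul,
    Pi.zero_apply]

lemma mulVec_signVec_eq_zero [Fintype κ] {A : Matrix ι κ ℤ} (hA : ∀ i, ∑ j, |A i j| ≤ 2)
    (hx : A.map (Int.cast : ℤ → R) *ᵥ x = 0) : A.map (Int.cast : ℤ → R) *ᵥ signVec x = 0 :=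
  funext fun i => sum_mul_sign_eq_zero_of_sum_mul_eq_zero (hA i) (congrFun hx i)

end SignVector

section RelativeMagnitude

variable {m n : ℕ} {x : Fin n → ℝ}

lemma one_le_omegaVec (hx : x ≠ 0) : 1 ≤ omegaVec x := by
  obtain ⟨i, hi⟩ := Function.ne_iff.1 hx
  have hfinite : {r : ℝ | ∃ i j, x i ≠ 0 ∧ r = |x j| / |x i|}.Finite := by
    refine (Set.finite_range fun p : Fin n × Fin n => |x p.2| / |x p.1|).subset ?_
    rintro r ⟨i, j, -, rfl⟩
    exact ⟨(i, j), rfl⟩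
  exact le_csSup hfinite.bddAbove ⟨i, i, hi, (div_self (abs_ne_zero.2 hi)).symm⟩

lemma omegaVec_eq_one_of_abs_le (hx : x ≠ 0) (h : ∀ i j, x i ≠ 0 → |x j| ≤ |x i|) :
    omegaVec x = 1 := by
  refine le_antisymm (Real.sSup_le ?_ zero_le_one) (one_le_omegaVec hx)
  rintro r ⟨i, j, hi, rfl⟩
  exact div_le_one_of_le₀ (h i j hi) (abs_nonneg _)

lemma omegaVec_signVec (hx : x ≠ 0) : omegaVec (signVec x) = 1 := by
  refine omegaVec_eq_one_of_abs_le (signVec_ne_zero hx) fun i j => ?_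
  simp only [signVec]
  cases sign (x i) <;> cases sign (x j) <;> simp

lemma omegaMat_eq_one_of_omegaVec_eq_one {A : Matrix (Fin m) (Fin n) ℝ} (hx : x ≠ 0)
    (hAx : A *ᵥ x = 0) (hω : omegaVec x = 1) : omegaMat A = 1 := by
  refine IsLeast.csInf_eq ⟨⟨x, hx, hAx, hω.symm⟩, ?_⟩
  rintro r ⟨y, hy, -, rfl⟩
  exact one_le_omegaVec hy

lemma omegaMat_eq_zero_of_trivial_nullSpace {A : Matrix (Fin m) (Fin n) ℝ}
    (hA : ∀ x, A *ᵥ x = 0 → x = 0) : omegaMat A = 0 := by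
  refine (congrArg sInf (Set.eq_empty_of_forall_notMem ?_)).trans Real.sInf_empty
  rintro r ⟨x, hx, hAx, -⟩
  exact hx (hA x hAx)

lemma omegaMat_eq_zero_or_one_of_mulVec_signVec {A : Matrix (Fin m) (Fin n) ℝ}
    (hA : ∀ x, A *ᵥ x = 0 → A *ᵥ signVec x = 0) : omegaMat A = 0 ∨ omegaMat A = 1 := by
  by_cases hker : ∀ x, A *ᵥ x = 0 → x = 0
  · exact .inl (omegaMat_eq_zero_of_trivial_nullSpace hker)
  · push Not at hker
    obtain ⟨x, hAx, hx⟩ := hker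
    exact .inr (omegaMat_eq_one_of_omegaVec_eq_one (signVec_ne_zero hx) (hA x hAx)
      (omegaVec_signVec hx))

end RelativeMagnitude

lemma sum_abs_le_normInf {m n : ℕ} (A : Matrix (Fin m) (Fin n) ℤ) (i : Fin m) :
    ∑ j, |A i j| ≤ normInf A := by
  have hrow : ∑ j, (A i j).natAbs ≤ normInf A :=
    Finset.le_sup (f := fun i => ∑ j, (A i j).natAbs) (Finset.mem_univ i)
  simpa only [Nat.cast_sum, Int.natCast_natAbs] using Int.ofNat_le.2 hrow

theorem stmt1 {m n : ℕ} (A : Matrix (Fin m) (Fin n) ℤ) (hA : A ≠ 0)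
    (hnorm : normInf A = 1 ∨ normInf A = 2) :
    omegaMat (A.map (Int.cast : ℤ → ℝ)) = 0 ∨ omegaMat (A.map (Int.cast : ℤ → ℝ)) = 1 := by
  have hrow (i : Fin m) : ∑ j, |A i j| ≤ 2 := (sum_abs_le_normInf A i).trans (by lia)
  exact omegaMat_eq_zero_or_one_of_mulVec_signVec fun x hAx => mulVec_signVec_eq_zero hrow hAx
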